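/- Let d be the shortest-path metric of the complete bipartite graph K_{3,2} on 5 vertices: with parts A of size 3 and B of size 2, d(u,u) = 0, d(u,v) = 1 if u and v lie in different parts, and d(u,v) = 2 if u ≠ v lie in the same part. Then (the 5-point metric space given by) d does not embed isometrically into ℓ¹; in particular, for every n ∈ ℕ there is no map φ from the 5 vertices into ℝ^n with ‖φ(u) − φ(v)‖₁ = d(u,v) for all u, v. -/

import Mathlib

/-!
The obstruction is the pentagonal inequality: for three points `a, b, c` and two points `x, y` of
an `L¹`-type space, the distances inside the two groups sum to at most the distances across. On the
real line this is `pentagonal_abs`; summing over coordinates gives it for `ℓ¹` and `(ℝ^n, ‖·‖₁)`.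
In `K_{3,2}` the distances inside the parts sum to `3 · 2 + 2 = 8`, those across to `6 · 1 = 6`,
so the inequality fails.
-/

/-- The shortest-path metric of the complete bipartite graph `K_{3,2}` on `Fin 3 ⊕ Fin 2`:
`0` on the diagonal, `1` between vertices in different parts, `2` between distinct vertices
in the same part. -/
def dK32 (u v : Fin 3 ⊕ Fin 2) : ℝ :=
  if u = v then 0 else if u.isLeft = v.isLeft then 2 else 1

/-- The pentagonal inequality on the line. If `b` lies between `a` and `c`, the left side is
`2 |a - c| + |x - y|`, and three triangle inequalities (through `x`, through `y`, through `b`)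
suffice. -/
lemma pentagonal_abs (a b c x y : ℝ) :
    |a - b| + |a - c| + |b - c| + |x - y| ≤
      |a - x| + |a - y| + |b - x| + |b - y| + |c - x| + |c - y| := by
  have sorted : ∀ a b c : ℝ, a ≤ b → b ≤ c →
      |a - b| + |a - c| + |b - c| + |x - y| ≤
        |a - x| + |a - y| + |b - x| + |b - y| + |c - x| + |c - y| := by
    intro a b c hab hbc
    rw [abs_of_nonpos (by linarith : a - b ≤ 0), abs_of_nonpos (by linarith : a - c ≤ 0),
      abs_of_nonpos (by linarith : b - c ≤ 0)]
    have hxy := abs_sub_le x b y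
    rw [abs_sub_comm x b] at hxy
    linarith [neg_abs_le (a - x), neg_abs_le (a - y), le_abs_self (c - x), le_abs_self (c - y)]
  have hab := abs_sub_comm a b
  have hac := abs_sub_comm a c
  have hbc := abs_sub_comm b c
  rcases le_total a b with h1 | h1 <;> rcases le_total b c with h2 | h2 <;>
    rcases le_total a c with h3 | h3
  · linarith [sorted a b c h1 h2]
  · linarith [sorted a b c h1 h2]
  · linarith [sorted a c b h3 h2]
  · linarith [sorted c a b h3 h1]
  · linarith [sorted b a c h1 h3]
  · linarith [sorted b c a h2 h3]
  · linarith [sorted c b a h2 h1]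
  · linarith [sorted c b a h2 h1]

/-- Phrased with `HasSum` over an arbitrary index type, so as to cover both `ℓ¹` and `ℝ^n`. -/
lemma not_hasSum_dK32 {ι : Type*} (f : Fin 3 ⊕ Fin 2 → ι → ℝ)
    (h : ∀ u v, HasSum (fun i => |f u i - f v i|) (dK32 u v)) : False := by
  have inside := (((h (.inl 0) (.inl 1)).add (h (.inl 0) (.inl 2))).add
    (h (.inl 1) (.inl 2))).add (h (.inr 0) (.inr 1))
  have across := (((((h (.inl 0) (.inr 0)).add (h (.inl 0) (.inr 1))).add
    (h (.inl 1) (.inr 0))).add (h (.inl 1) (.inr 1))).add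
    (h (.inl 2) (.inr 0))).add (h (.inl 2) (.inr 1))
  have hle := hasSum_le (fun i => pentagonal_abs _ _ _ _ _) inside across
  have same_left : ∀ i j : Fin 3, i ≠ j → dK32 (.inl i) (.inl j) = 2 := fun i j hij => by
    simp [dK32, hij]
  have same_right : dK32 (.inr 0) (.inr 1) = 2 := by simp [dK32]
  have cross : ∀ (i : Fin 3) (j : Fin 2), dK32 (.inl i) (.inr j) = 1 := fun i j => by
    rw [dK32, if_neg Sum.inl_ne_inr]
    simp
  rw [same_left 0 1 (by decide), same_left 0 2 (by decide), same_left 1 2 (by decide),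
    same_right] at hle
  simp only [cross] at hle
  norm_num at hle

/-- The 5-point metric space `K_{3,2}` (complete bipartite graph with its path metric) does
not embed isometrically into `ℓ¹`; in particular, for every `n` there is no isometric
embedding into `(ℝ^n, ‖·‖₁)`. -/
theorem K32_does_not_embed_into_l1 :
    (¬ ∃ φ : Fin 3 ⊕ Fin 2 → lp (fun _ : ℕ => ℝ) 1,
        ∀ u v, ‖φ u - φ v‖ = dK32 u v) ∧
    (∀ n : ℕ, ¬ ∃ φ : Fin 3 ⊕ Fin 2 → (Fin n → ℝ),
        ∀ u v, (∑ i : Fin n, |φ u i - φ v i|) = dK32 u v) := by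
  constructor
  · rintro ⟨φ, hφ⟩
    refine not_hasSum_dK32 (fun u i => φ u i) fun u v => ?_
    have hs := lp.hasSum_norm (p := 1) (by norm_num) (φ u - φ v)
    simpa [hφ, Real.norm_eq_abs] using hs
  · rintro n ⟨φ, hφ⟩
    refine not_hasSum_dK32 φ fun u v => ?_
    rw [← hφ u v]
    exact hasSum_fintype _
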